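/- Let m ≥ 2. The value 1 − 1/m² is the greatest element of the set of average success probabilities achievable by deterministic classical strategies for the (2,m) random exclusion code with one bit of communication: every strategy has average success probability at most 1 − 1/m², and some strategy achieves exactly 1 − 1/m². -/

import Mathlib

/-!
It suffices to count failures: `1 - 1/m²` corresponds to exactly two failing pairs out of `2m²`.

Write `(x₀, y₀)` and `(x₁, y₁)` for the pairs of answers given on messages `0` and `1`. Whatever
the message sent for the word `(x₀, y₁)`, one of its two questions fails, and the same holds for
`(x₁, y₀)`. If these words differ this gives two failures; if they agree then the answers do not
depend on the message, and the word `(x₀, y₀)` fails on both questions.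

Conversely, answer `0` on message `0` and `1` on message `1`, and send message `0` exactly when the
word does not contain the letter `0`. A failure then needs a word containing both `0` and `1`, so
only `(0, 1)` and `(1, 0)` fail, each on one question.
-/

/-- Number of pairs `(a, i)` on which the deterministic classical strategy `(E, b)` for
the `(2,m)` random exclusion code succeeds, i.e. `b (E a) i ≠ aᵢ`. -/
def recSuccessCount (m : ℕ) (E : Fin m × Fin m → Fin 2) (b : Fin 2 × Fin 2 → Fin m) : ℕ :=
  (Finset.univ.filter fun x : (Fin m × Fin m) × Fin 2 =>
    b (E x.1, x.2) ≠ (if x.2 = 0 then x.1.1 else x.1.2)).card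

/-- The set of pairs `(a, i)` on which the strategy `(E, b)` fails. -/
def recFailures (m : ℕ) (E : Fin m × Fin m → Fin 2) (b : Fin 2 × Fin 2 → Fin m) :
    Finset ((Fin m × Fin m) × Fin 2) :=
  Finset.univ.filter fun x => b (E x.1, x.2) = (if x.2 = 0 then x.1.1 else x.1.2)

lemma recSuccessCount_add_failures (m : ℕ) (E : Fin m × Fin m → Fin 2)
    (b : Fin 2 × Fin 2 → Fin m) :
    recSuccessCount m E b + (recFailures m E b).card = 2 * m ^ 2 := by
  have h := Finset.card_filter_add_card_filter_not (s := Finset.univ)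
    (fun x : (Fin m × Fin m) × Fin 2 => b (E x.1, x.2) = (if x.2 = 0 then x.1.1 else x.1.2))
  simp only [Finset.card_univ, Fintype.card_prod, Fintype.card_fin] at h
  unfold recSuccessCount recFailures
  rw [add_comm]
  exact h.trans (by ring)

lemma two_le_card_recFailures (m : ℕ) (E : Fin m × Fin m → Fin 2) (b : Fin 2 × Fin 2 → Fin m) :
    2 ≤ (recFailures m E b).card := by
  have two : ∀ e : Fin 2, e = 0 ∨ e = 1 := by decide
  have fail₁ : ∃ i, ((b (0, 0), b (1, 1)), i) ∈ recFailures m E b := by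
    rcases two (E (b (0, 0), b (1, 1))) with h | h
    · exact ⟨0, by simp [recFailures, h]⟩
    · exact ⟨1, by simp [recFailures, h]⟩
  have fail₂ : ∃ i, ((b (1, 0), b (0, 1)), i) ∈ recFailures m E b := by
    rcases two (E (b (1, 0), b (0, 1))) with h | h
    · exact ⟨1, by simp [recFailures, h]⟩
    · exact ⟨0, by simp [recFailures, h]⟩
  apply Finset.one_lt_card.2
  by_cases hne : (b (0, 0), b (1, 1)) = (b (1, 0), b (0, 1))
  · obtain ⟨hx, hy⟩ := Prod.mk.inj hne
    refine ⟨((b (0, 0), b (0, 1)), 0), ?_, ((b (0, 0), b (0, 1)), 1), ?_, by simp⟩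
    · rcases two (E (b (0, 0), b (0, 1))) with h | h <;> simp [recFailures, h, ← hx]
    · rcases two (E (b (0, 0), b (0, 1))) with h | h <;> simp [recFailures, h, hy]
  · obtain ⟨i, hi⟩ := fail₁
    obtain ⟨j, hj⟩ := fail₂
    exact ⟨_, hi, _, hj, fun h => hne (congrArg Prod.fst h)⟩

lemma exists_card_recFailures_eq_two (m : ℕ) (hm : 2 ≤ m) :
    ∃ (E : Fin m × Fin m → Fin 2) (b : Fin 2 × Fin 2 → Fin m), (recFailures m E b).card = 2 := by
  obtain ⟨u, v, huv⟩ : ∃ u v : Fin m, u ≠ v :=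
    ⟨⟨0, by omega⟩, ⟨1, by omega⟩, by simp⟩
  refine ⟨fun a => if a.1 = u ∨ a.2 = u then 1 else 0, fun q => if q.1 = 0 then u else v, ?_⟩
  have : recFailures m (fun a => if a.1 = u ∨ a.2 = u then 1 else 0)
      (fun q => if q.1 = 0 then u else v) = {((u, v), 1), ((v, u), 0)} := by
    ext ⟨⟨p, q⟩, i⟩
    fin_cases i <;> simp [recFailures] <;> grind
  rw [this, Finset.card_pair (by simp)]

/-- The maximum average classical success probability of the `(2,m)` REC is `1 - 1/m²`. -/
theorem stmt2 (m : ℕ) (hm : 2 ≤ m) :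
    IsGreatest {p : ℝ | ∃ (E : Fin m × Fin m → Fin 2) (b : Fin 2 × Fin 2 → Fin m),
      p = (recSuccessCount m E b : ℝ) / (2 * (m : ℝ) ^ 2)}
      (1 - 1 / (m : ℝ) ^ 2) := by
  have hm0 : (0 : ℝ) < m := by exact_mod_cast (by omega : 0 < m)
  have hval : (1 - 1 / (m : ℝ) ^ 2) = (2 * (m : ℝ) ^ 2 - 2) / (2 * (m : ℝ) ^ 2) := by
    field_simp
  have hsum (E : Fin m × Fin m → Fin 2) (b : Fin 2 × Fin 2 → Fin m) :
      (recSuccessCount m E b : ℝ) + ((recFailures m E b).card : ℝ) = 2 * (m : ℝ) ^ 2 := by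
    exact_mod_cast recSuccessCount_add_failures m E b
  rw [hval]
  constructor
  · obtain ⟨E, b, h⟩ := exists_card_recFailures_eq_two m hm
    refine ⟨E, b, ?_⟩
    have hs := hsum E b
    rw [h] at hs
    congr 1
    push_cast at hs
    linarith
  · rintro p ⟨E, b, rfl⟩
    have hs := hsum E b
    have hf : (2 : ℝ) ≤ ((recFailures m E b).card : ℝ) := by
      exact_mod_cast two_le_card_recFailures m E b
    gcongr
    linarith
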